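/- Let l = (p−3)/2, let i ∈ ℕ₀, and let γ = Σ_{a=2}^{l+1} c_a·ϑ_a with c_2, …, c_{l+1} ∈ K. For 2 ≤ a ≤ l+1 set u_a = (θ^a − 1)(θ^{1−a} − 1) and v_a = (θ^a − θ^{1−a})·u_a^i·κ^{−(2i+1)} ∈ K; let V_i be the l × l diagonal matrix with diagonal entries v_a (a = 2, …, l+1), and let B be the l × l Vandermonde matrix with entries B_{a,j} = u_a^{j−1} for 2 ≤ a ≤ l+1 and 1 ≤ j ≤ l. If γ ∈ Ĥ_i, then the row vector (c_2, …, c_{l+1})·V_i·B lies in O^l ∖ 𝔭^l; that is, each of its l entries lies in O and at least one entry does not lie in 𝔭. -/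

import Mathlib

/-!
Put `κ = θ - 1`. Any form with `γ(θx, θy) = θ·γ(x, y)` satisfies
`κ·γ(x, y) = γ(κx, κy) + γ(κx, y) + γ(x, κy)`. If `γ` is also alternating, then, because
`𝒪 = ℤ_p[κ]`, it maps `𝔭^i × 𝔭^i` into a submodule `N` if and only if `γ(κ^(n+1), κ^n) ∈ N` for
all `n ≥ i`. For `γ = ∑ c_a·ϑ_a` these values are `∑ u_a^n·(θ^a - θ^(1-a))·c_a`; at `n = i + j`
this is `κ^(2i+1)` times the entry of index `j`, counted from `0`, of `(c_a)·V_i·B`. As the `l`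
numbers `u_a` are the roots of a monic polynomial of degree `l`, the values with `j < l` decide.
Taking `N = 𝔭^(2i+1)` puts the entries in `𝒪`, and `N = 𝔭^(2i+2)` shows that they are not all
in `𝔭`.
-/

set_option synthInstance.maxHeartbeats 1000000
set_option maxHeartbeats 1000000

namespace MaximalClassFrame

variable (p : ℕ) [Fact p.Prime]
variable (K : Type) [Field K] [Algebra ℚ_[p] K] [Algebra ℤ_[p] K]
  [IsScalarTower ℤ_[p] ℚ_[p] K]

/-- The maximal order `𝒪` of `K`: the integral closure of `ℤ_p` in `K`. -/
noncomputable abbrev 𝒪 : Subalgebra ℤ_[p] K := integralClosure ℤ_[p] K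

variable (θ : 𝒪 p K)

/-- The maximal ideal `𝔭` of `𝒪`, generated by `κ = θ - 1`. -/
noncomputable def pid : Ideal (𝒪 p K) := Ideal.span {θ - 1}

/-- A `ℤ_p`-bilinear map `γ : 𝒪 × 𝒪 → 𝒪` is `P`-equivariant if it is
alternating and satisfies `γ(θx, θy) = θ·γ(x,y)` for all `x, y`. -/
def IsPEquivariant (γ : 𝒪 p K →ₗ[ℤ_[p]] 𝒪 p K →ₗ[ℤ_[p]] 𝒪 p K) : Prop :=
  (∀ x, γ x x = 0) ∧ ∀ x y, γ (θ * x) (θ * y) = θ * γ x y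

/-- `γ ∈ Ĥ_i`: the additive subgroup of `𝒪` generated by
`{γ(x,y) : x, y ∈ 𝔭^i}` equals `𝔭^(2i+1)`. -/
def InHhat (i : ℕ) (γ : 𝒪 p K →ₗ[ℤ_[p]] 𝒪 p K →ₗ[ℤ_[p]] 𝒪 p K) : Prop :=
  Submodule.span ℤ (Set.image2 (fun x y => γ x y)
      ((pid p K θ ^ i : Ideal (𝒪 p K)) : Set (𝒪 p K))
      ((pid p K θ ^ i : Ideal (𝒪 p K)) : Set (𝒪 p K)))
    = (pid p K θ ^ (2 * i + 1)).restrictScalars ℤ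

variable (σ : ℤ → (K →ₐ[ℚ_[p]] K))

/-- The map `ϑ_a(x,y) = σ_a(x)·σ_{1-a}(y) − σ_{1-a}(x)·σ_a(y)` on `K × K`. -/
noncomputable def thetaMap (a : ℤ) : K → K → K :=
  fun x y => σ a x * σ (1 - a) y - σ (1 - a) x * σ a y

section Module

open scoped Pointwise

variable {O M ι : Type*} [CommRing O] [AddCommGroup M] [Module O M]

theorem smul_mem_smul_iff_of_isSMulRegular {a : O} (ha : IsSMulRegular M a) {N : Submodule O M}
    {z : M} : a • z ∈ a • N ↔ z ∈ N := by
  refine ⟨fun h => ?_, N.smul_mem_pointwise_smul z a⟩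
  obtain ⟨y, hy, hyz⟩ := (Submodule.mem_smul_pointwise_iff_exists _ _ _).1 h
  rwa [← ha hyz]

open Polynomial in
theorem sum_pow_smul_mem_of_lt_card [Fintype ι] {N : Submodule O M} {u : ι → O} {e : ι → M}
    (h : ∀ j < Fintype.card ι, ∑ k, u k ^ j • e k ∈ N) (j : ℕ) : ∑ k, u k ^ j • e k ∈ N := by
  rcases subsingleton_or_nontrivial O with _ | _
  · have := Module.subsingleton O M
    rw [Subsingleton.elim (∑ k, _) (0 : M)]
    exact N.zero_mem
  let χ : O[X] := ∏ k, (X - C (u k))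
  have hχ : χ.Monic := monic_prod_of_monic _ _ fun k _ => monic_X_sub_C _
  have hdeg : χ.degree ≤ Fintype.card ι := by
    rw [degree_eq_natDegree hχ.ne_zero, natDegree_finsetProd_X_sub_C_eq_card, Finset.card_univ]
  have hroot (k : ι) : aeval (u k) χ = 0 := by
    rw [map_prod]
    exact Finset.prod_eq_zero (Finset.mem_univ k) (by simp)
  have hpow (k : ι) :
      u k ^ j = ∑ m : Fin (Fintype.card ι), (X ^ j %ₘ χ).coeff m * u k ^ (m : ℕ) := by
    rw [← aeval_X_pow (R := O) (u k), ← aeval_modByMonic_eq_self_of_root (hroot k)]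
    conv_lhs => rw [← sum_modByMonic_coeff hχ hdeg]
    simp [aeval_monomial]
  have hsum : ∑ k, u k ^ j • e k =
      ∑ m : Fin (Fintype.card ι), (X ^ j %ₘ χ).coeff m • ∑ k, u k ^ (m : ℕ) • e k := by
    simp only [hpow, Finset.sum_smul, Finset.smul_sum, mul_smul]
    exact Finset.sum_comm
  exact hsum ▸ sum_mem fun m _ => N.smul_mem _ (h m m.2)

theorem pow_mem_span_singleton_pow {a : O} {m n : ℕ} (h : m ≤ n) : a ^ n ∈ Ideal.span {a} ^ m :=
  Ideal.pow_le_pow_right h (Ideal.pow_mem_pow (Ideal.mem_span_singleton_self a) n)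

theorem mem_pow_smul_one_iff {F : Type*} [CommRing F] [Algebra O F] {a : O} {s : ℕ} {z : F} :
    z ∈ a ^ s • (1 : Submodule O F) ↔ ∃ b ∈ Ideal.span {a} ^ s, algebraMap O F b = z := by
  simp only [Submodule.mem_smul_pointwise_iff_exists, Submodule.mem_one, Ideal.span_singleton_pow,
    Ideal.mem_span_singleton', Algebra.smul_def, exists_exists_eq_and, map_mul, mul_comm]

theorem not_subset_pow_succ_smul_one {F : Type*} [CommRing F] [Algebra O F] [IsDomain O]
    [FaithfulSMul O F] {a : O} {s : ℕ} (ha : a ≠ 0) (hau : ¬ IsUnit a) {S : Set F}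
    (hS : Submodule.span ℤ (algebraMap O F ⁻¹' S) = (Ideal.span {a} ^ s).restrictScalars ℤ) :
    ¬ S ⊆ (a ^ (s + 1) • (1 : Submodule O F) : Submodule O F) := by
  intro h
  have hle : (Ideal.span {a} ^ s).restrictScalars ℤ ≤
      (Ideal.span {a} ^ (s + 1)).restrictScalars ℤ := by
    rw [← hS, Submodule.span_le]
    intro z hz
    obtain ⟨b, hb, hbz⟩ := mem_pow_smul_one_iff.1 (h hz)
    rwa [← FaithfulSMul.algebraMap_injective O F hbz]
  have hmem : a ^ s ∈ Ideal.span {a} ^ (s + 1) := hle (pow_mem_span_singleton_pow le_rfl)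
  rw [Ideal.span_singleton_pow, Ideal.mem_span_singleton] at hmem
  exact (pow_dvd_pow_iff ha hau).1 hmem |>.not_gt s.lt_succ_self

end Module

section EquivariantForm

open scoped Pointwise

variable {A O M : Type*} [CommRing A] [CommRing O] [Algebra A O] [AddCommGroup M] [Module A M]
  [Module O M]

theorem restrictScalars_span_singleton_pow_le {x : O} (hx : Algebra.adjoin A {x} = ⊤) (i : ℕ) :
    (Ideal.span {x} ^ i).restrictScalars A ≤ Submodule.span A ((x ^ ·) '' Set.Ici i) := by
  intro y hy
  rw [Submodule.restrictScalars_mem, Ideal.span_singleton_pow] at hy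
  obtain ⟨z, rfl⟩ := Ideal.mem_span_singleton.1 hy
  rw [Algebra.adjoin_singleton_eq_range_aeval] at hx
  obtain ⟨P, rfl⟩ := (AlgHom.range_eq_top _).1 hx z
  rw [Polynomial.aeval_eq_sum_range, Finset.mul_sum]
  refine sum_mem fun n _ => ?_
  rw [mul_smul_comm, ← pow_add]
  exact Submodule.smul_mem _ _ (Submodule.subset_span ⟨i + n, Nat.le_add_right i n, rfl⟩)

theorem apply_mem_of_pow_pow_mem [IsScalarTower A O M] {γ : O →ₗ[A] O →ₗ[A] M}
    {N : Submodule O M} {x : O} (hx : Algebra.adjoin A {x} = ⊤) {i : ℕ}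
    (h : ∀ m ≥ i, ∀ n ≥ i, γ (x ^ m) (x ^ n) ∈ N) {y z : O}
    (hy : y ∈ Ideal.span {x} ^ i) (hz : z ∈ Ideal.span {x} ^ i) : γ y z ∈ N := by
  have hle := restrictScalars_span_singleton_pow_le hx i
  have hspan : Submodule.map₂ γ (Submodule.span A ((x ^ ·) '' Set.Ici i))
      (Submodule.span A ((x ^ ·) '' Set.Ici i)) ≤ N.restrictScalars A := by
    rw [Submodule.map₂_span_span, Submodule.span_le]
    rintro _ ⟨_, ⟨m, hm, rfl⟩, _, ⟨n, hn, rfl⟩, rfl⟩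
    exact h m hm n hn
  exact Submodule.map₂_le.1 hspan y (hle hy) z (hle hz)

/-- The paper's `P`-equivariant maps, with values in an arbitrary `O`-module: alternating forms
`γ` with `γ(ζx, ζy) = ζ·γ(x, y)`. -/
structure IsEquivariantForm (ζ : O) (γ : O →ₗ[A] O →ₗ[A] M) : Prop where
  isAlt : γ.IsAlt
  mul_mul : ∀ x y, γ (ζ * x) (ζ * y) = ζ • γ x y

namespace IsEquivariantForm

variable {ζ : O} {γ : O →ₗ[A] O →ₗ[A] M} {N L : Submodule O M} {i : ℕ}

theorem sub_one_smul (hγ : IsEquivariantForm ζ γ) (x y : O) :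
    (ζ - 1) • γ x y =
      γ ((ζ - 1) * x) ((ζ - 1) * y) + γ ((ζ - 1) * x) y + γ x ((ζ - 1) * y) := by
  have h := hγ.mul_mul x y
  simp only [sub_smul, sub_mul, one_mul, one_smul, map_sub, LinearMap.sub_apply, ← h]
  abel

theorem sub_one_smul_pow_pow (hγ : IsEquivariantForm ζ γ) (m n : ℕ) :
    (ζ - 1) • γ ((ζ - 1) ^ m) ((ζ - 1) ^ n) =
      γ ((ζ - 1) ^ (m + 1)) ((ζ - 1) ^ (n + 1)) + γ ((ζ - 1) ^ (m + 1)) ((ζ - 1) ^ n) +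
        γ ((ζ - 1) ^ m) ((ζ - 1) ^ (n + 1)) := by
  simpa only [← pow_succ'] using hγ.sub_one_smul ((ζ - 1) ^ m) ((ζ - 1) ^ n)

theorem pow_add_pow_mem (hγ : IsEquivariantForm ζ γ)
    (h : ∀ n ≥ i, γ ((ζ - 1) ^ (n + 1)) ((ζ - 1) ^ n) ∈ N) (d : ℕ) {n : ℕ} (hn : i ≤ n) :
    γ ((ζ - 1) ^ (n + d)) ((ζ - 1) ^ n) ∈ N := by
  induction d using Nat.twoStepInduction generalizing n with
  | zero => simp [hγ.isAlt.self_eq_zero]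
  | one => exact h n hn
  | more d ih₀ ih₁ =>
    have h₀ := ih₀ (Nat.le_succ_of_le hn)
    have h₁ := ih₁ (Nat.le_succ_of_le hn)
    rw [Nat.succ_add_eq_add_succ] at h₀ h₁
    have hsum := N.smul_mem (ζ - 1) (ih₁ hn)
    rw [hγ.sub_one_smul_pow_pow] at hsum
    exact (add_mem_cancel_left h₁).1 ((add_mem_cancel_right h₀).1 hsum)

theorem pow_pow_mem (hγ : IsEquivariantForm ζ γ)
    (h : ∀ n ≥ i, γ ((ζ - 1) ^ (n + 1)) ((ζ - 1) ^ n) ∈ N) {m n : ℕ} (hm : i ≤ m) (hn : i ≤ n) :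
    γ ((ζ - 1) ^ m) ((ζ - 1) ^ n) ∈ N := by
  rcases le_total n m with hnm | hmn
  · exact Nat.add_sub_cancel' hnm ▸ hγ.pow_add_pow_mem h (m - n) hn
  · rw [← hγ.isAlt.neg, neg_mem_iff]
    exact Nat.add_sub_cancel' hmn ▸ hγ.pow_add_pow_mem h (n - m) hm

theorem mem_iff_pow_succ_pow_mem [IsScalarTower A O M] (hγ : IsEquivariantForm ζ γ)
    (hζ : Algebra.adjoin A {ζ - 1} = ⊤) :
    (∀ x ∈ Ideal.span {ζ - 1} ^ i, ∀ y ∈ Ideal.span {ζ - 1} ^ i, γ x y ∈ N) ↔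
      ∀ n ≥ i, γ ((ζ - 1) ^ (n + 1)) ((ζ - 1) ^ n) ∈ N := by
  refine ⟨fun h n hn => h _ (pow_mem_span_singleton_pow (Nat.le_succ_of_le hn)) _
    (pow_mem_span_singleton_pow hn), fun h x hx y hy =>
    apply_mem_of_pow_pow_mem hζ (fun m hm n hn => hγ.pow_pow_mem h hm hn) hx hy⟩

/- Downward induction on `m + n`: with `κ = ζ - 1`, `κ • γ(κ^m, κ^n)` is a sum of three values of
higher total degree. -/
theorem pow_pow_mem_of_mem_smul (hγ : IsEquivariantForm ζ γ) (hreg : IsSMulRegular M (ζ - 1))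
    (hL : ∀ m ≥ i, ∀ n ≥ i, γ ((ζ - 1) ^ m) ((ζ - 1) ^ n) ∈ L →
      γ ((ζ - 1) ^ m) ((ζ - 1) ^ n) ∈ (ζ - 1) • L)
    {b : ℕ} (hb : ∀ m n, b ≤ m + n → γ ((ζ - 1) ^ m) ((ζ - 1) ^ n) ∈ L)
    {m n : ℕ} (hm : i ≤ m) (hn : i ≤ n) : γ ((ζ - 1) ^ m) ((ζ - 1) ^ n) ∈ L := by
  suffices h : ∀ d m n, i ≤ m → i ≤ n → b ≤ m + n + d → γ ((ζ - 1) ^ m) ((ζ - 1) ^ n) ∈ L from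
    h b m n hm hn (Nat.le_add_left _ _)
  intro d
  induction d with
  | zero => exact fun m n _ _ hmn => hb m n hmn
  | succ d ih =>
    intro m n hm hn hmn
    have hstep {m' n' : ℕ} (hm' : i ≤ m') (hn' : i ≤ n') (hmn' : m + n + 1 ≤ m' + n') :
        γ ((ζ - 1) ^ m') ((ζ - 1) ^ n') ∈ (ζ - 1) • L :=
      hL m' hm' n' hn' (ih m' n' hm' hn' (by omega))
    rw [← smul_mem_smul_iff_of_isSMulRegular hreg, hγ.sub_one_smul_pow_pow]
    exact add_mem (add_mem (hstep (by omega) (by omega) (by omega))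
      (hstep (by omega) hn (by omega))) (hstep hm (by omega) (by omega))

theorem mem_pow_smul_one {F : Type*} [CommRing F] [Algebra O F] [Algebra A F]
    [IsScalarTower A O F] {γ : O →ₗ[A] O →ₗ[A] F} {s : ℕ} (hγ : IsEquivariantForm ζ γ)
    (hζ : Algebra.adjoin A {ζ - 1} = ⊤) (hreg : IsSMulRegular F (ζ - 1))
    {b : ℕ} (hb : ∀ m n, b ≤ m + n → γ ((ζ - 1) ^ m) ((ζ - 1) ^ n) ∈ (1 : Submodule O F))
    (hs : s ≠ 0) (hval : ∀ z : O, (∃ x ∈ Ideal.span {ζ - 1} ^ i, ∃ y ∈ Ideal.span {ζ - 1} ^ i,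
      algebraMap O F z = γ x y) → z ∈ Ideal.span {ζ - 1} ^ s) {x y : O}
    (hx : x ∈ Ideal.span {ζ - 1} ^ i) (hy : y ∈ Ideal.span {ζ - 1} ^ i) :
    γ x y ∈ (ζ - 1) ^ s • (1 : Submodule O F) := by
  have hint {x y : O} (hx : x ∈ Ideal.span {ζ - 1} ^ i) (hy : y ∈ Ideal.span {ζ - 1} ^ i)
      (h : γ x y ∈ (1 : Submodule O F)) : γ x y ∈ (ζ - 1) ^ s • (1 : Submodule O F) := by
    obtain ⟨z, hz⟩ := Submodule.mem_one.1 h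
    exact mem_pow_smul_one_iff.2 ⟨z, hval z ⟨x, hx, y, hy, hz⟩, hz⟩
  have hle : (ζ - 1) ^ s • (1 : Submodule O F) ≤ (ζ - 1) • 1 := by
    obtain ⟨t, rfl⟩ := Nat.exists_eq_succ_of_ne_zero hs
    rw [pow_succ', mul_smul]
    exact smul_mono_right _ (Submodule.smul_le_self_of_tower _ _)
  have hpow {m n : ℕ} (hm : i ≤ m) (hn : i ≤ n) :
      γ ((ζ - 1) ^ m) ((ζ - 1) ^ n) ∈ (1 : Submodule O F) :=
    hγ.pow_pow_mem_of_mem_smul hreg (fun m hm n hn h =>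
      hle (hint (pow_mem_span_singleton_pow hm) (pow_mem_span_singleton_pow hn) h)) hb hm hn
  exact hint hx hy (apply_mem_of_pow_pow_mem hζ (fun m hm n hn => hpow hm hn) hx hy)

end IsEquivariantForm

end EquivariantForm

section FrameForm

open scoped Pointwise

variable {A O M ι : Type*} [CommRing A] [CommRing O] [Algebra A O] [AddCommGroup M] [Module A M]
  [Module O M] [IsScalarTower A O M] [Fintype ι]

/-- The combination `∑ c_a·ϑ_a`, for arbitrary pairs of endomorphisms `(f_k, g_k)` in place of
`(σ_a, σ_{1-a})`, and with the coefficients `c_k` taken from an `O`-module. -/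
noncomputable def frameForm (f g : ι → O →ₐ[A] O) (c : ι → M) : O →ₗ[A] O →ₗ[A] M :=
  LinearMap.mk₂ A (fun x y => ∑ k, (f k x * g k y - g k x * f k y) • c k)
    (fun x x' y => by
      simp only [map_add, ← Finset.sum_add_distrib, ← add_smul]
      congr! 2
      ring)
    (fun r x y => by
      simp only [map_smul, smul_mul_assoc, ← smul_sub, smul_assoc, Finset.smul_sum])
    (fun x y y' => by
      simp only [map_add, ← Finset.sum_add_distrib, ← add_smul]
      congr! 2
      ring)
    (fun r x y => by
      simp only [map_smul, mul_smul_comm, ← smul_sub, smul_assoc, Finset.smul_sum])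

variable {f g : ι → O →ₐ[A] O} {c : ι → M} {ζ : O}

theorem frameForm_apply (x y : O) :
    frameForm f g c x y = ∑ k, (f k x * g k y - g k x * f k y) • c k :=
  rfl

theorem isEquivariantForm_frameForm (hfg : ∀ k, f k ζ * g k ζ = ζ) :
    IsEquivariantForm ζ (frameForm f g c) where
  isAlt x := by simp [frameForm_apply, mul_comm]
  mul_mul x y := by
    simp only [frameForm_apply, Finset.smul_sum, smul_smul, map_mul]
    congr! 2 with k
    linear_combination (f k x * g k y - g k x * f k y) * hfg k

theorem frameForm_pow_succ_pow (n : ℕ) :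
    frameForm f g c ((ζ - 1) ^ (n + 1)) ((ζ - 1) ^ n) =
      ∑ k, ((f k ζ - 1) * (g k ζ - 1)) ^ n • (f k ζ - g k ζ) • c k := by
  simp only [frameForm_apply, map_pow, map_sub, map_one, smul_smul, mul_pow]
  congr! 2 with k
  ring

theorem frameForm_mem_iff {N : Submodule O M} (hfg : ∀ k, f k ζ * g k ζ = ζ)
    (hζ : Algebra.adjoin A {ζ - 1} = ⊤) (i : ℕ) :
    (∀ x ∈ Ideal.span {ζ - 1} ^ i, ∀ y ∈ Ideal.span {ζ - 1} ^ i, frameForm f g c x y ∈ N) ↔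
      ∀ j < Fintype.card ι,
        ∑ k, ((f k ζ - 1) * (g k ζ - 1)) ^ (i + j) • (f k ζ - g k ζ) • c k ∈ N := by
  rw [(isEquivariantForm_frameForm hfg).mem_iff_pow_succ_pow_mem hζ]
  simp only [frameForm_pow_succ_pow]
  refine ⟨fun h j _ => h _ (Nat.le_add_right i j), fun h n hn => ?_⟩
  obtain ⟨j, rfl⟩ := Nat.exists_eq_add_of_le' hn
  simp only [add_comm i, pow_add, mul_smul _ (_ ^ i)] at h ⊢
  exact sum_pow_smul_mem_of_lt_card h j

theorem exists_forall_frameForm_pow_pow_mem {a : O} {L : Submodule O M} (hf : ∀ k, a ∣ f k a)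
    (hg : ∀ k, a ∣ g k a) (hc : ∀ k, ∃ n : ℕ, a ^ n • c k ∈ L) :
    ∃ b, ∀ m n, b ≤ m + n → frameForm f g c (a ^ m) (a ^ n) ∈ L := by
  choose b hb using hc
  refine ⟨Finset.univ.sup b, fun m n hmn => sum_mem fun k _ => ?_⟩
  have hdvd : a ^ b k ∣ f k (a ^ m) * g k (a ^ n) - g k (a ^ m) * f k (a ^ n) := by
    refine (pow_dvd_pow a ((Finset.le_sup (Finset.mem_univ k)).trans hmn)).trans ?_
    simp only [map_pow, pow_add]
    exact dvd_sub (mul_dvd_mul (pow_dvd_pow_of_dvd (hf k) m) (pow_dvd_pow_of_dvd (hg k) n))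
      (mul_dvd_mul (pow_dvd_pow_of_dvd (hg k) m) (pow_dvd_pow_of_dvd (hf k) n))
  obtain ⟨d, hd⟩ := hdvd
  rw [hd, mul_comm, mul_smul]
  exact L.smul_mem d (hb k)

theorem frameForm_coefficient_criterion {F : Type*} [CommRing F] [Algebra O F] [Algebra A F]
    [IsScalarTower A O F] [IsDomain O] [FaithfulSMul O F] {n i s : ℕ} {f g : Fin n → O →ₐ[A] O}
    {c w : Fin n → F} (hfg : ∀ k, f k ζ * g k ζ = ζ) (hf : ∀ k, ζ - 1 ∣ f k (ζ - 1))
    (hg : ∀ k, ζ - 1 ∣ g k (ζ - 1)) (hζ : Algebra.adjoin A {ζ - 1} = ⊤) (hunit : ¬ IsUnit (ζ - 1))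
    (hreg : IsSMulRegular F (ζ - 1)) (hc : ∀ k, ∃ m : ℕ, (ζ - 1) ^ m • c k ∈ (1 : Submodule O F))
    (hs : s ≠ 0) (hspan : Submodule.span ℤ {z : O | ∃ x ∈ Ideal.span {ζ - 1} ^ i,
      ∃ y ∈ Ideal.span {ζ - 1} ^ i, algebraMap O F z = frameForm f g c x y} =
        (Ideal.span {ζ - 1} ^ s).restrictScalars ℤ)
    (hw : ∀ j : Fin n, (ζ - 1) ^ s • w j =
      ∑ k, ((f k ζ - 1) * (g k ζ - 1)) ^ (i + j : ℕ) • (f k ζ - g k ζ) • c k) :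
    (∀ j, w j ∈ Set.range (algebraMap O F)) ∧
      ∃ j, w j ∉ algebraMap O F '' (Ideal.span {ζ - 1} : Ideal O) := by
  obtain ⟨b, hb⟩ := exists_forall_frameForm_pow_pow_mem hf hg hc
  have hmem (N : Submodule O F) (j : Fin n) : w j ∈ N ↔
      ∑ k, ((f k ζ - 1) * (g k ζ - 1)) ^ (i + j : ℕ) • (f k ζ - g k ζ) • c k ∈
        (ζ - 1) ^ s • N := by
    rw [← hw, smul_mem_smul_iff_of_isSMulRegular (hreg.pow s)]
  have hvalues : ∀ x ∈ Ideal.span {ζ - 1} ^ i, ∀ y ∈ Ideal.span {ζ - 1} ^ i,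
      frameForm f g c x y ∈ (ζ - 1) ^ s • (1 : Submodule O F) := fun x hx y hy =>
    (isEquivariantForm_frameForm hfg).mem_pow_smul_one hζ hreg hb hs
      (fun z hz => hspan.le (Submodule.subset_span hz)) hx hy
  refine ⟨fun j => Submodule.mem_one.1 ((hmem 1 j).2 ?_), ?_⟩
  · exact (frameForm_mem_iff hfg hζ i).1 hvalues j (by simp)
  · by_contra! hall
    have : Nontrivial F := (FaithfulSMul.algebraMap_injective O F).nontrivial
    have hne : ζ - 1 ≠ 0 := fun h => IsSMulRegular.not_zero (h ▸ hreg)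
    refine not_subset_pow_succ_smul_one hne hunit
      (S := {z | ∃ x ∈ Ideal.span {ζ - 1} ^ i, ∃ y ∈ Ideal.span {ζ - 1} ^ i,
        z = frameForm f g c x y}) hspan ?_
    rintro _ ⟨x, hx, y, hy, rfl⟩
    refine (frameForm_mem_iff hfg hζ i).2 (fun j hj => ?_) x hx y hy
    rw [pow_succ, mul_smul]
    have hwj := hall ⟨j, by simpa using hj⟩
    rw [← pow_one (Ideal.span _)] at hwj
    exact (hmem _ _).1 (pow_one (ζ - 1) ▸ mem_pow_smul_one_iff.2 hwj)

end FrameForm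

section Adjoin

variable {A O : Type*} [CommRing A] [CommRing O] [Algebra A O]

theorem adjoin_singleton_sub_one (x : O) : Algebra.adjoin A {x - 1} = Algebra.adjoin A {x} := by
  refine le_antisymm (Algebra.adjoin_le ?_) (Algebra.adjoin_le ?_)
  · exact Set.singleton_subset_iff.2
      (sub_mem (Algebra.self_mem_adjoin_singleton A x) (one_mem _))
  · exact Set.singleton_subset_iff.2
      (by simpa using add_mem (Algebra.self_mem_adjoin_singleton A (x - 1)) (one_mem _))

theorem exists_eq_algebraMap_add_mul_of_mem_adjoin {x y : O} (hy : y ∈ Algebra.adjoin A {x}) :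
    ∃ a, ∃ b ∈ Algebra.adjoin A {x}, y = algebraMap A O a + x * b := by
  rw [Algebra.adjoin_singleton_eq_range_aeval] at hy
  obtain ⟨P, rfl : Polynomial.aeval x P = y⟩ := hy
  refine ⟨P.coeff 0, _, Polynomial.aeval_mem_adjoin_singleton A x (p := P.divX), ?_⟩
  conv_lhs => rw [← P.divX_mul_X_add, map_add, map_mul, Polynomial.aeval_X, Polynomial.aeval_C]
  ring

-- `A[x]` is closed under division by `x`: only the constant term of a multiple of `x` matters.
theorem adjoin_singleton_eq_top_of_dvd {x : O} (hx : IsLeftRegular x)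
    (hA : ∀ a, x ∣ algebraMap A O a → ∃ b ∈ Algebra.adjoin A {x}, algebraMap A O a = x * b)
    (hpow : ∀ z, ∃ n : ℕ, x ^ n * z ∈ Algebra.adjoin A {x}) : Algebra.adjoin A {x} = ⊤ := by
  have hmul {z : O} (hz : x * z ∈ Algebra.adjoin A {x}) : z ∈ Algebra.adjoin A {x} := by
    obtain ⟨a, b, hb, hab⟩ := exists_eq_algebraMap_add_mul_of_mem_adjoin hz
    obtain ⟨d, hd, had⟩ := hA a ⟨z - b, by rw [mul_sub, hab, add_sub_cancel_right]⟩
    rw [hx (show x * z = x * (d + b) by rw [hab, had, mul_add])]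
    exact add_mem hd hb
  refine Algebra.eq_top_iff.2 fun z => ?_
  obtain ⟨n, hn⟩ := hpow z
  induction n with
  | zero => simpa using hn
  | succ n ih => exact ih (hmul (by rwa [← mul_assoc, ← pow_succ']))

end Adjoin

section PrimePowerRoot

variable {p} {R : Type*} [CommRing R] {x : R} {r : ℕ}

theorem natCast_dvd_sub_one_pow (hx : x ^ p ^ r = 1) : (p : R) ∣ (x - 1) ^ p ^ r := by
  obtain ⟨y, hy⟩ := exists_add_pow_prime_pow_eq (Fact.out : p.Prime) (x - 1) 1 r
  rw [sub_add_cancel, hx, one_pow] at hy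
  exact ⟨-((x - 1) * y), by linear_combination -hy⟩

theorem not_isUnit_sub_one (hp : ¬ IsUnit (p : R)) (hx : x ^ p ^ r = 1) : ¬ IsUnit (x - 1) :=
  fun hu => hp (isUnit_of_dvd_unit (natCast_dvd_sub_one_pow hx) (hu.pow _))

theorem sub_one_dvd_natCast [IsDomain R] (hx : IsPrimitiveRoot x (p ^ (r + 1))) :
    x - 1 ∣ (p : R) := by
  have h := Polynomial.sub_dvd_eval_sub x 1 (Polynomial.cyclotomic (p ^ (r + 1)) R)
  rwa [(hx.isRoot_cyclotomic (NeZero.pos _)).eq_zero, Polynomial.eval_one_cyclotomic_prime_pow,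
    zero_sub, dvd_neg] at h

theorem sub_one_ne_zero (hx : IsPrimitiveRoot x (p ^ (r + 1))) : x - 1 ≠ 0 :=
  sub_ne_zero.2 (hx.ne_one (Nat.one_lt_pow r.succ_ne_zero (Fact.out : p.Prime).one_lt))

theorem sub_one_dvd_map_sub_one [IsDomain R] {n : ℕ} [NeZero n] (hx : IsPrimitiveRoot x n)
    {G : Type*} [FunLike G R R] [RingHomClass G R R] (f : G) : x - 1 ∣ f (x - 1) := by
  have hfx : f x ^ n = 1 := by rw [← map_pow, hx.pow_eq_one, map_one]
  obtain ⟨j, -, hj⟩ := hx.eq_pow_of_pow_eq_one hfx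
  rw [map_sub, map_one, ← hj]
  exact sub_one_dvd_pow_sub_one x j

end PrimePowerRoot

section PadicInt

variable {p} {R : Type*} [CommRing R] [Algebra ℤ_[p] R] {x : R} {r : ℕ}

theorem exists_dvd_natCast_pow {t : ℤ_[p]} (ht : t ≠ 0) : ∃ n : ℕ, t ∣ (p : ℤ_[p]) ^ n :=
  ⟨t.valuation, by
    conv_lhs => rw [PadicInt.unitCoeff_spec ht]
    exact (Units.mul_left_dvd).2 dvd_rfl⟩

theorem exists_algebraMap_dvd_sub_one_pow (hx : x ^ p ^ r = 1) {t : ℤ_[p]} (ht : t ≠ 0) :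
    ∃ n, algebraMap ℤ_[p] R t ∣ (x - 1) ^ n := by
  obtain ⟨n, hn⟩ := exists_dvd_natCast_pow ht
  refine ⟨p ^ r * n, (map_dvd _ hn).trans ?_⟩
  simpa only [map_pow, map_natCast, pow_mul] using
    pow_dvd_pow_of_dvd (natCast_dvd_sub_one_pow hx) n

theorem sub_one_dvd_algebraMap [IsDomain R] (hx : IsPrimitiveRoot x (p ^ (r + 1))) {a : ℤ_[p]}
    (ha : ¬ IsUnit a) : x - 1 ∣ algebraMap ℤ_[p] R a := by
  have hpa : (p : ℤ_[p]) ∣ a := by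
    rwa [← PadicInt.norm_lt_one_iff_dvd, ← PadicInt.mem_nonunits]
  exact (sub_one_dvd_natCast hx).trans (by simpa using map_dvd (algebraMap ℤ_[p] R) hpa)

end PadicInt

section MaximalOrder

variable {p K θ} {r : ℕ}

theorem not_isUnit_natCast_p : ¬ IsUnit (p : 𝒪 p K) := by
  rw [← map_natCast (algebraMap ℤ_[p] (𝒪 p K))]
  have : FaithfulSMul ℤ_[p] K := FaithfulSMul.trans ℤ_[p] ℚ_[p] K
  exact fun hu => PadicInt.prime_p.not_isUnit (isUnit_of_map_unit _ _ hu)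

theorem exists_pow_smul_eq_coe_adjoin (hθ : θ ^ p ^ r = 1)
    (hgen : Algebra.adjoin ℚ_[p] {(θ : K)} = ⊤) (z : K) :
    ∃ n : ℕ, ∃ b ∈ Algebra.adjoin ℤ_[p] {θ}, (b : K) = (θ - 1) ^ n • z := by
  obtain ⟨⟨t, ht⟩, htz⟩ := multiple_mem_adjoin_of_mem_localization_adjoin (nonZeroDivisors ℤ_[p])
    ℚ_[p] {(θ : K)} z (hgen ▸ Algebra.mem_top)
  rw [show (θ : K) = (𝒪 p K).val θ from rfl, ← AlgHom.map_adjoin_singleton] at htz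
  obtain ⟨b, hb, hbz : (b : K) = t • z⟩ := htz
  let θ' : Algebra.adjoin ℤ_[p] {θ} := ⟨θ, Algebra.self_mem_adjoin_singleton _ θ⟩
  obtain ⟨n, d, hd⟩ := exists_algebraMap_dvd_sub_one_pow (x := θ') (Subtype.ext hθ)
    (nonZeroDivisors.ne_zero ht)
  have hdK : ((θ : K) - 1) ^ n = algebraMap ℤ_[p] K t * d :=
    congrArg (fun y : Algebra.adjoin ℤ_[p] {θ} => ((y : 𝒪 p K) : K)) hd
  refine ⟨n, d * b, mul_mem d.2 hb, ?_⟩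
  rw [Algebra.smul_def] at hbz
  change (d : K) * b = ((θ : K) - 1) ^ n * z
  linear_combination (d : K) * hbz - z * hdK

theorem adjoin_sub_one_eq_top (hθ : IsPrimitiveRoot θ (p ^ (r + 1)))
    (hgen : Algebra.adjoin ℚ_[p] {(θ : K)} = ⊤) : Algebra.adjoin ℤ_[p] {θ - 1} = ⊤ := by
  let θ' : Algebra.adjoin ℤ_[p] {θ} := ⟨θ, Algebra.self_mem_adjoin_singleton _ θ⟩
  have hθ' : IsPrimitiveRoot θ' (p ^ (r + 1)) := IsPrimitiveRoot.coe_submonoidClass_iff.1 hθ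
  refine adjoin_singleton_eq_top_of_dvd (mul_right_injective₀ (sub_one_ne_zero hθ)) ?_ ?_ <;>
    rw [adjoin_singleton_sub_one]
  · intro a ha
    have hau : ¬ IsUnit a := fun hu => not_isUnit_sub_one not_isUnit_natCast_p hθ.pow_eq_one
      (isUnit_of_dvd_unit ha (hu.map _))
    obtain ⟨b, hb⟩ := sub_one_dvd_algebraMap hθ' hau
    exact ⟨b, b.2, congrArg Subtype.val hb⟩
  · intro z
    obtain ⟨n, b, hb, hbz⟩ := exists_pow_smul_eq_coe_adjoin hθ.pow_eq_one hgen z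
    exact ⟨n, (Subtype.ext hbz : b = (θ - 1) ^ n * z) ▸ hb⟩

variable (p K) in
/-- The endomorphism of the maximal order `𝒪` induced by an endomorphism of `K`. -/
noncomputable abbrev integralRestrict (f : K →ₐ[ℚ_[p]] K) : 𝒪 p K →ₐ[ℤ_[p]] 𝒪 p K :=
  (f.restrictScalars ℤ_[p]).mapIntegralClosure

theorem frameForm_integralRestrict {ι : Type*} [Fintype ι] (a : ι → ℤ) (c : ι → K) (x y : 𝒪 p K) :
    frameForm (fun k => integralRestrict p K (σ (a k)))
      (fun k => integralRestrict p K (σ (1 - a k))) c x y =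
        ∑ k, c k * thetaMap p K σ (a k) (x : K) (y : K) := by
  simp only [mul_comm (c _)]
  rfl

end MaximalOrder

section Matrix

open Matrix

theorem mul_vecMul_diagonal_vecMul_pow {R ι : Type*} [CommSemiring R] [Fintype ι] [DecidableEq ι]
    {n : ℕ} {x y : R} (hxy : x * y = 1) (c d u : ι → R) (i : ℕ) (j : Fin n) :
    x * (c ᵥ* diagonal (fun k => d k * u k ^ i * y) ᵥ* of fun k (j : Fin n) => u k ^ (j : ℕ)) j =
      ∑ k, u k ^ (i + j : ℕ) * (d k * c k) := by
  simp only [vecMul, dotProduct, of_apply, Finset.mul_sum]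
  refine Finset.sum_congr rfl fun k _ => ?_
  change x * ((c ᵥ* diagonal _) k * _) = _
  rw [vecMul_diagonal]
  calc x * (c k * (d k * u k ^ i * y) * u k ^ (j : ℕ))
      = x * y * (u k ^ (i + j : ℕ) * (d k * c k)) := by ring
    _ = u k ^ (i + j : ℕ) * (d k * c k) := by rw [hxy, one_mul]

end Matrix

theorem frame_coefficient_criterion_general {r n : ℕ} (hθ : IsPrimitiveRoot (θ : K) (p ^ (r + 1)))
    (hgen : Algebra.adjoin ℚ_[p] {(θ : K)} = ⊤) {f g : Fin n → 𝒪 p K →ₐ[ℤ_[p]] 𝒪 p K}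
    (hfg : ∀ k, f k θ * g k θ = θ) (i : ℕ) (c : Fin n → K)
    (hHhat : Submodule.span ℤ {z : 𝒪 p K | ∃ x ∈ pid p K θ ^ i, ∃ y ∈ pid p K θ ^ i,
        (z : K) = frameForm f g c x y} = (pid p K θ ^ (2 * i + 1)).restrictScalars ℤ) :
    let u : Fin n → K := fun k => ((f k θ : K) - 1) * ((g k θ : K) - 1)
    let v : Fin n → K := fun k =>
      ((f k θ : K) - (g k θ : K)) * u k ^ i * ((θ : K) - 1) ^ (-(2 * (i : ℤ) + 1))
    let w : Fin n → K :=
      Matrix.vecMul (Matrix.vecMul c (Matrix.diagonal v)) (Matrix.of fun k j => u k ^ (j : ℕ))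
    (∀ k, w k ∈ 𝒪 p K) ∧ ∃ k, ¬ ∃ z ∈ pid p K θ, (z : K) = w k := by
  intro u v w
  have hroot : IsPrimitiveRoot θ (p ^ (r + 1)) := IsPrimitiveRoot.coe_submonoidClass_iff.1 hθ
  have hκ : (θ : K) - 1 ≠ 0 := sub_one_ne_zero hθ
  have hinv : ((θ : K) - 1) ^ (2 * i + 1) * ((θ : K) - 1) ^ (-(2 * (i : ℤ) + 1)) = 1 := by
    rw [← zpow_natCast, ← zpow_add₀ hκ]
    simp
  have hcoeff := frameForm_coefficient_criterion (ζ := θ) (c := c) (w := w) hfg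
    (fun k => sub_one_dvd_map_sub_one hroot (f k)) (fun k => sub_one_dvd_map_sub_one hroot (g k))
    (adjoin_sub_one_eq_top hroot hgen) (not_isUnit_sub_one not_isUnit_natCast_p hroot.pow_eq_one)
    (fun _ _ h => mul_left_cancel₀ hκ h)
    (fun k => (exists_pow_smul_eq_coe_adjoin hroot.pow_eq_one hgen (c k)).imp
      fun m ⟨b, _, hb⟩ => Submodule.mem_one.2 ⟨b, hb⟩)
    (2 * i).succ_ne_zero hHhat
    (mul_vecMul_diagonal_vecMul_pow hinv c (fun k => (f k θ : K) - g k θ) u i)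
  exact ⟨fun k => by simpa using hcoeff.1 k, hcoeff.2⟩

/-- Let `l = (p−3)/2` and let `γ = Σ_{a=2}^{l+1} c_a·ϑ_a`.  With
`u_a = (θ^a−1)(θ^{1−a}−1)`, `v_a = (θ^a−θ^{1−a})·u_a^i·κ^{−(2i+1)}`, `V_i` the
diagonal matrix with entries `v_a` and `B` the Vandermonde matrix `(u_a^{j−1})`:
if `γ ∈ Ĥ_i`, then the row vector `(c_2,…,c_{l+1})·V_i·B` lies in `𝒪^l ∖ 𝔭^l`. -/
theorem frame_coefficient_criterion (hp : 5 ≤ p) (hθ : IsPrimitiveRoot (θ : K) p)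
    (hgen : Algebra.adjoin ℚ_[p] {(θ : K)} = ⊤)
    (hσ : ∀ j : ℤ, ¬ ((p : ℤ) ∣ j) → σ j (θ : K) = (θ : K) ^ j)
    (i : ℕ) (c : Fin ((p - 3) / 2) → K)
    (hHhat : Submodule.span ℤ {z : 𝒪 p K | ∃ x ∈ pid p K θ ^ i, ∃ y ∈ pid p K θ ^ i,
        (z : K) = ∑ k : Fin ((p - 3) / 2),
          c k * thetaMap p K σ (((k : ℕ) + 2 : ℕ) : ℤ) (x : K) (y : K)}
      = (pid p K θ ^ (2 * i + 1)).restrictScalars ℤ) :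
    let u : Fin ((p - 3) / 2) → K := fun k =>
      ((θ : K) ^ ((((k : ℕ) + 2 : ℕ)) : ℤ) - 1) * ((θ : K) ^ (1 - ((((k : ℕ) + 2 : ℕ)) : ℤ)) - 1)
    let v : Fin ((p - 3) / 2) → K := fun k =>
      ((θ : K) ^ ((((k : ℕ) + 2 : ℕ)) : ℤ) - (θ : K) ^ (1 - ((((k : ℕ) + 2 : ℕ)) : ℤ)))
        * u k ^ i * ((θ : K) - 1) ^ (-(2 * (i : ℤ) + 1))
    let w : Fin ((p - 3) / 2) → K :=
      Matrix.vecMul (Matrix.vecMul c (Matrix.diagonal v)) (Matrix.of fun k j => u k ^ (j : ℕ))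
    (∀ k, w k ∈ 𝒪 p K) ∧ ∃ k, ¬ ∃ z ∈ pid p K θ, (z : K) = w k := by
  have hndvd {a : ℤ} (h₀ : a ≠ 0) (hlo : -p < a) (hhi : a < p) : ¬ (p : ℤ) ∣ a := fun h =>
    h₀ (Int.eq_zero_of_abs_lt_dvd h (abs_lt.2 ⟨hlo, hhi⟩))
  have hf (k : Fin ((p - 3) / 2)) :
      σ ((k : ℕ) + 2 : ℕ) (θ : K) = (θ : K) ^ (((k : ℕ) + 2 : ℕ) : ℤ) :=
    hσ _ (hndvd (by omega) (by omega) (by omega))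
  have hg (k : Fin ((p - 3) / 2)) :
      σ (1 - ((k : ℕ) + 2 : ℕ)) (θ : K) = (θ : K) ^ (1 - (((k : ℕ) + 2 : ℕ) : ℤ)) :=
    hσ _ (hndvd (by omega) (by omega) (by omega))
  have hfg (k : Fin ((p - 3) / 2)) : integralRestrict p K (σ ((k : ℕ) + 2 : ℕ)) θ *
      integralRestrict p K (σ (1 - ((k : ℕ) + 2 : ℕ))) θ = θ := Subtype.ext <| by
    change σ _ (θ : K) * σ _ (θ : K) = θ
    rw [hf, hg, ← zpow_add₀ (hθ.ne_zero (NeZero.ne p)), add_sub_cancel, zpow_one]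
  have h := frame_coefficient_criterion_general p K θ (r := 0) (by simpa using hθ) hgen hfg i c
    (by simpa only [frameForm_integralRestrict] using hHhat)
  simpa only [AlgHom.coe_mapIntegralClosure, AlgHom.coe_restrictScalars', hf, hg] using h

end MaximalClassFrame
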